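/- Let α ∈ C and d ≥ 2. There exists a constant δ depending only on d such that for every normal-form polynomial f = f_c of degree d over Q̄ (viewed in C), if |α| ≤ C_{f} (i.e., α ∉ B_f(∞)), then every y ∈ C with f^3(y) = α satisfies min over β with f^3(β) = 0 of log|y − β| ≤ −(1/(d−1)) M(f) + δ, where M(f) is the maximal escape rate of a critical point of f. -/

import Mathlib

open Polynomial Filter Topology

/-- The escape radius C_f = 2d · max_{0≤i≤d}{1, |a_i/a_d|^{1/(d-i)}, |a_d|^{-1/(d-1)}};
B_f(∞) = {z ∈ ℂ : |z| > C_f}. -/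
noncomputable def escBound (f : Polynomial ℂ) (d : ℕ) : ℝ :=
  (2 * d : ℝ) *
    (Finset.range (d + 1)).sup' (Finset.nonempty_range_iff.mpr (Nat.succ_ne_zero d))
      (fun i => max 1 (max (‖f.coeff i / f.coeff d‖ ^ ((1 : ℝ) / ((d : ℝ) - (i : ℝ))))
        (‖f.coeff d‖ ^ (-(1 : ℝ) / ((d : ℝ) - 1)))))

/-!
Let `R = max {1, |c₁|, …, |c_{d-1}|}`. Bounding the coefficients of `f` gives `C_f ≤ 2d²R`, and the
disk of radius `C_f` is backward invariant, so all points met while pulling back have size `O(R)`.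
Since `|f| ≤ (2A)^d` on the disk of radius `A ≥ R`, the critical points satisfy `M(f) ≤ log (4R)`,
and it suffices to bound `log |y - β|` by `-(1/(d-1)) log R + O(1)`. For bounded `R` take `β = 0`.

For large `R`, let `|w| ≤ C_f`. By Gauss–Lucas and `f(0) = 0`, every `z` is at distance at least
`R/4` from some point of the fibre `f⁻¹(w)`. As `|f(z) - w| = d⁻¹ ∏ |z - s|` over this fibre, some
`s` in it has `|z - s|^{d-1} ≤ 4d |f(z) - w| / R`. Pulling back from `0` along the orbit of `y`, the
distances are `O(R)`, then `O(1)`, then `O(R^{-1/(d-1)})`.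
-/

section Roots

variable {K : Type*} [NormedField K] {p : K[X]}

theorem norm_eval_eq_norm_leadingCoeff_mul_prod_roots (hp : p.Splits) (z : K) :
    ‖p.eval z‖ = ‖p.leadingCoeff‖ * (p.roots.map fun s ↦ ‖z - s‖).prod := by
  have hprod := map_multiset_prod (normHom (α := K)) (p.roots.map fun s ↦ z - s)
  rw [hp.eval_eq_prod_roots, norm_mul]
  congr 1
  simpa [Multiset.map_map, Function.comp_def] using hprod

theorem norm_eval_le_of_roots_norm_le (hp : p.Splits) {R : ℝ} (hR : ∀ c ∈ p.roots, ‖c‖ ≤ R)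
    (z : K) : ‖p.eval z‖ ≤ ‖p.leadingCoeff‖ * (‖z‖ + R) ^ p.natDegree := by
  rw [norm_eval_eq_norm_leadingCoeff_mul_prod_roots hp, hp.natDegree_eq_card_roots,
    ← Multiset.prod_replicate, ← Multiset.map_const']
  gcongr
  exact Multiset.prod_map_le_prod_map₀ _ _ (fun _ _ ↦ norm_nonneg _)
    fun c hc ↦ (norm_sub_le z c).trans (by gcongr; exact hR c hc)

theorem exists_isRoot_norm_sub_pow_le (hp : p.Splits) (hdeg : p.natDegree ≠ 0) (z : K) :
    ∃ s, p.IsRoot s ∧ ‖p.leadingCoeff‖ * ‖z - s‖ ^ p.natDegree ≤ ‖p.eval z‖ := by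
  have hroots : p.roots ≠ 0 := by
    rwa [← Multiset.card_pos, ← hp.natDegree_eq_card_roots, Nat.pos_iff_ne_zero]
  obtain ⟨s, hs, hmin⟩ := Multiset.exists_min_image (fun s ↦ ‖z - s‖) hroots
  refine ⟨s, isRoot_of_mem_roots hs, ?_⟩
  rw [norm_eval_eq_norm_leadingCoeff_mul_prod_roots hp, hp.natDegree_eq_card_roots,
    ← Multiset.prod_replicate, ← Multiset.map_const']
  gcongr
  exact Multiset.prod_map_le_prod_map₀ _ _ (fun _ _ ↦ norm_nonneg _) hmin

theorem exists_isRoot_norm_sub_mul_norm_sub_pow_le (hp : p.Splits) (hdeg : 2 ≤ p.natDegree)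
    {r : K} (hr : p.IsRoot r) (z : K) :
    ∃ s, p.IsRoot s ∧
      ‖p.leadingCoeff‖ * (‖z - r‖ * ‖z - s‖ ^ (p.natDegree - 1)) ≤ ‖p.eval z‖ := by
  obtain ⟨q, rfl⟩ := dvd_iff_isRoot.mpr hr
  have hne : (X - C r) * q ≠ 0 := by rintro h; simp [h] at hdeg
  have hq : q.natDegree = ((X - C r) * q).natDegree - 1 := by
    rw [natDegree_mul (X_sub_C_ne_zero r) (right_ne_zero_of_mul hne), natDegree_X_sub_C,
      Nat.add_sub_cancel_left]
  obtain ⟨s, hs, hle⟩ := exists_isRoot_norm_sub_pow_le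
    (hp.of_dvd hne (dvd_mul_left q (X - C r))) (by omega) z
  refine ⟨s, root_mul_left_of_isRoot _ hs, ?_⟩
  rw [← hq, leadingCoeff_mul, leadingCoeff_X_sub_C, one_mul, mul_left_comm, eval_mul, norm_mul]
  simpa using mul_le_mul_of_nonneg_left hle (norm_nonneg (z - r))

theorem norm_leadingCoeff_mul_pow_le_two_mul_norm_eval (hp : p.natDegree ≠ 0) {m : ℝ} (hm : 0 ≤ m)
    (hcoeff : ∀ i < p.natDegree, ‖p.coeff i‖ ≤ ‖p.leadingCoeff‖ * m ^ (p.natDegree - i)) {z : K}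
    (hz : 2 * p.natDegree * m ≤ ‖z‖) :
    ‖p.leadingCoeff‖ * ‖z‖ ^ p.natDegree ≤ 2 * ‖p.eval z‖ := by
  generalize hn : p.natDegree = n at *
  have hn1 : (1 : ℝ) ≤ n := by exact_mod_cast Nat.one_le_iff_ne_zero.mpr hp
  have hmz : m ≤ ‖z‖ := by nlinarith
  have hterm : ∀ i ∈ Finset.range n,
      ‖p.coeff i * z ^ i‖ ≤ ‖p.leadingCoeff‖ * (m * ‖z‖ ^ (n - 1)) := fun i hi ↦ by
    rw [Finset.mem_range] at hi
    rw [norm_mul, norm_pow]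
    calc ‖p.coeff i‖ * ‖z‖ ^ i ≤ ‖p.leadingCoeff‖ * m ^ (n - i) * ‖z‖ ^ i := by
          gcongr
          exact hcoeff i hi
      _ = ‖p.leadingCoeff‖ * (m * (m ^ (n - 1 - i) * ‖z‖ ^ i)) := by
        rw [show n - i = n - 1 - i + 1 by omega]; ring
      _ ≤ ‖p.leadingCoeff‖ * (m * (‖z‖ ^ (n - 1 - i) * ‖z‖ ^ i)) := by gcongr
      _ = ‖p.leadingCoeff‖ * (m * ‖z‖ ^ (n - 1)) := by
        rw [← pow_add, Nat.sub_add_cancel (by omega)]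
  have hlower : 2 * ‖∑ i ∈ Finset.range n, p.coeff i * z ^ i‖ ≤ ‖p.leadingCoeff‖ * ‖z‖ ^ n :=
    calc 2 * ‖∑ i ∈ Finset.range n, p.coeff i * z ^ i‖
        ≤ 2 * ∑ _i ∈ Finset.range n, ‖p.leadingCoeff‖ * (m * ‖z‖ ^ (n - 1)) := by
          gcongr
          exact norm_sum_le_of_le _ hterm
      _ = ‖p.leadingCoeff‖ * (2 * n * m * ‖z‖ ^ (n - 1)) := by
        rw [Finset.sum_const, Finset.card_range, nsmul_eq_mul]; ring
      _ ≤ ‖p.leadingCoeff‖ * (‖z‖ * ‖z‖ ^ (n - 1)) := by gcongr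
      _ = ‖p.leadingCoeff‖ * ‖z‖ ^ n := by rw [mul_pow_sub_one hp]
  have hlead : p.leadingCoeff * z ^ n = p.eval z - ∑ i ∈ Finset.range n, p.coeff i * z ^ i := by
    rw [eval_eq_sum_range, hn, Finset.sum_range_succ, leadingCoeff, hn, add_sub_cancel_left]
  have htri := norm_sub_le (p.eval z) (∑ i ∈ Finset.range n, p.coeff i * z ^ i)
  rw [← hlead, norm_mul, norm_pow] at htri
  linarith

end Roots

/-- Gauss–Lucas: if all roots were closer to `z` than `c` is, a disk would contain them
but not `c`. -/
theorem exists_isRoot_norm_sub_le_of_derivative_isRoot {p : ℂ[X]} (hp : p.derivative ≠ 0) {c : ℂ}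
    (hc : p.derivative.IsRoot c) (z : ℂ) : ∃ s, p.IsRoot s ∧ ‖z - c‖ ≤ ‖z - s‖ := by
  by_contra! hnear
  have hdeg : 0 < p.degree := by
    contrapose! hp
    rw [eq_C_of_degree_le_zero hp, derivative_C]
  have hball : p.rootSet ℂ ⊆ Metric.ball z ‖z - c‖ := fun s hs ↦ by
    simpa [dist_eq_norm, norm_sub_rev] using hnear s (by simpa using (mem_rootSet.mp hs).2)
  have hmem : c ∈ convexHull ℝ (p.rootSet ℂ) :=
    rootSet_derivative_subset_convexHull_rootSet hdeg
      (mem_rootSet.mpr ⟨hp, by simpa using hc⟩)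
  have := convexHull_min hball (convex_ball z _) hmem
  simp [dist_eq_norm, norm_sub_rev] at this

section EscapeRadius

variable {f : ℂ[X]} {d : ℕ}

theorem escBound_le_iff (hd : 2 ≤ d) {m : ℝ} (hm : 0 ≤ m) :
    escBound f d ≤ 2 * d * m ↔
      1 ≤ m ∧ (∀ i < d, ‖f.coeff i / f.coeff d‖ ≤ m ^ (d - i)) ∧
        ‖f.coeff d‖⁻¹ ≤ m ^ (d - 1) := by
  have hroot {x : ℝ} (hx : 0 ≤ x) {i : ℕ} (hi : i < d) :
      x ^ (1 / ((d : ℝ) - i)) ≤ m ↔ x ≤ m ^ (d - i) := by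
    rw [← Nat.cast_sub hi.le, one_div,
      Real.rpow_inv_le_iff_of_pos hx hm (by simpa using hi), Real.rpow_natCast]
  have hlead : ‖f.coeff d‖ ^ (-(1 : ℝ) / ((d : ℝ) - 1)) ≤ m ↔ ‖f.coeff d‖⁻¹ ≤ m ^ (d - 1) := by
    rw [neg_div, Real.rpow_neg (norm_nonneg _), ← Real.inv_rpow (norm_nonneg _)]
    simpa using hroot (inv_nonneg.mpr (norm_nonneg (f.coeff d))) (i := 1) (by omega)
  rw [escBound, mul_le_mul_iff_right₀ (by positivity), Finset.sup'_le_iff]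
  simp only [max_le_iff, hlead, Finset.mem_range, Nat.lt_succ_iff]
  constructor
  · intro h
    exact ⟨(h 0 d.zero_le).1, fun i hi ↦ (hroot (norm_nonneg _) hi).mp (h i hi.le).2.1,
      (h 0 d.zero_le).2.2⟩
  · rintro ⟨h1, hcoeff, hlead⟩ i hi
    refine ⟨h1, ?_, hlead⟩
    obtain hi | rfl := hi.lt_or_eq
    · exact (hroot (norm_nonneg _) hi).mpr (hcoeff i hi)
    · simpa using h1

theorem norm_lt_norm_eval_of_escBound_lt (hd : 2 ≤ f.natDegree) {z : ℂ}
    (hz : escBound f f.natDegree < ‖z‖) : ‖z‖ < ‖f.eval z‖ := by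
  generalize hdef : f.natDegree = d at *
  have hd2 : (2 : ℝ) ≤ d := by exact_mod_cast hd
  have hlc : f.coeff d = f.leadingCoeff := by rw [leadingCoeff, hdef]
  have hlc0 : 0 < ‖f.leadingCoeff‖ := by
    rw [norm_pos_iff, leadingCoeff_ne_zero]; rintro rfl; rw [natDegree_zero] at hdef; omega
  obtain ⟨m, hm⟩ : ∃ m : ℝ, ‖z‖ = 2 * d * m := ⟨‖z‖ / (2 * d), by field_simp⟩
  have hm0 : 0 ≤ m := nonneg_of_mul_nonneg_right (hm ▸ norm_nonneg z) (by positivity)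
  obtain ⟨hm1, hcoeff, hlead⟩ := (escBound_le_iff hd hm0).mp (hz.le.trans_eq hm)
  have hgrowth : ‖f.leadingCoeff‖ * ‖z‖ ^ d ≤ 2 * ‖f.eval z‖ := by
    simpa [hdef] using norm_leadingCoeff_mul_pow_le_two_mul_norm_eval (p := f)
      (by omega) hm0
      (fun i hi ↦ by
        simpa [hlc, div_le_iff₀' hlc0, hdef] using hcoeff i (hdef ▸ hi))
      (by rw [hdef, hm])
  have hlead' : 1 ≤ ‖f.leadingCoeff‖ * m ^ (d - 1) := by
    rwa [hlc, inv_le_iff_one_le_mul₀' hlc0] at hlead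
  have hpow : 4 * ‖z‖ ≤ ‖f.leadingCoeff‖ * ‖z‖ ^ d :=
    calc 4 * ‖z‖ ≤ (2 * d) ^ (d - 1) * 1 * ‖z‖ := by
          gcongr
          rw [mul_one]
          exact (by linarith : (4 : ℝ) ≤ 2 * d).trans (le_self_pow₀ (by linarith) (by omega))
      _ ≤ (2 * d) ^ (d - 1) * (‖f.leadingCoeff‖ * m ^ (d - 1)) * ‖z‖ := by gcongr
      _ = ‖f.leadingCoeff‖ * (‖z‖ ^ (d - 1) * ‖z‖) := by rw [hm]; ring
      _ = ‖f.leadingCoeff‖ * ‖z‖ ^ d := by rw [pow_sub_one_mul (by omega)]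
  have hz0 : 0 < ‖z‖ := by rw [hm]; positivity
  linarith

theorem norm_le_escBound_of_norm_eval_le (hd : 2 ≤ f.natDegree) {z : ℂ}
    (hz : ‖f.eval z‖ ≤ escBound f f.natDegree) : ‖z‖ ≤ escBound f f.natDegree := by
  by_contra! hlt
  exact hz.not_gt (hlt.trans (norm_lt_norm_eval_of_escBound_lt hd hlt))

end EscapeRadius

theorem natDegree_ne_zero_of_monic_derivative {R : Type*} [Semiring R] [Nontrivial R] {p : R[X]}
    (hp : p.derivative.Monic) : p.natDegree ≠ 0 := fun h ↦
  hp.ne_zero (derivative_of_natDegree_zero h)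

theorem norm_leadingCoeff_of_monic_derivative {𝕜 : Type*} [RCLike 𝕜] {p : 𝕜[X]}
    (hp : p.derivative.Monic) :
    ‖p.leadingCoeff‖ = (p.natDegree : ℝ)⁻¹ := by
  have hlead := hp.leadingCoeff
  rw [leadingCoeff_derivative] at hlead
  rw [eq_inv_of_mul_eq_one_left hlead, norm_inv, RCLike.norm_natCast]

theorem log_le_of_mul_pow_le {a t D : ℝ} {n : ℕ} (ha : 0 < a) (ht : 0 < t) (hn : n ≠ 0)
    (hD : 1 ≤ D) (h : a * t ^ n ≤ D) :
    Real.log t ≤ -(1 / (n : ℝ)) * Real.log a + Real.log D := by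
  have hn1 : (1 : ℝ) ≤ n := by exact_mod_cast Nat.one_le_iff_ne_zero.mpr hn
  have hlog := Real.log_le_log (by positivity) h
  rw [Real.log_mul ha.ne' (by positivity), Real.log_pow] at hlog
  calc Real.log t ≤ (Real.log D - Real.log a) / n := by
        rw [le_div_iff₀' (by linarith)]; linarith
    _ = -(1 / (n : ℝ)) * Real.log a + Real.log D / n := by ring
    _ ≤ -(1 / (n : ℝ)) * Real.log a + Real.log D := by
        gcongr; exact div_le_self (Real.log_nonneg hD) hn1

/-- The radius `max {1, |c₁|, …, |c_{d-1}|}` of the smallest closed disk about `0` that contains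
the unit disk and all critical points `cᵢ` of `f`: the scale to which the dynamics of `f` is
compared. -/
noncomputable def critRadius (f : ℂ[X]) : ℝ :=
  max 1 (f.derivative.roots.toFinset.sup fun c ↦ ‖c‖₊ : NNReal)

section CritRadius

variable {f : ℂ[X]}

theorem one_le_critRadius (f : ℂ[X]) : 1 ≤ critRadius f := le_max_left _ _

theorem norm_le_critRadius {c : ℂ} (hc : c ∈ f.derivative.roots) : ‖c‖ ≤ critRadius f := by
  refine le_max_of_le_right ?_
  exact_mod_cast Finset.le_sup (f := fun c : ℂ ↦ ‖c‖₊) (Multiset.mem_toFinset.mpr hc)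

theorem exists_norm_eq_critRadius (hf : 1 < critRadius f) :
    ∃ c, f.derivative.IsRoot c ∧ ‖c‖ = critRadius f := by
  have hne : f.derivative.roots.toFinset.Nonempty := by
    by_contra! hempty
    simp [critRadius, hempty] at hf
  obtain ⟨c, hc, hsup⟩ := Finset.exists_mem_eq_sup _ hne fun c : ℂ ↦ ‖c‖₊
  refine ⟨c, isRoot_of_mem_roots (Multiset.mem_toFinset.mp hc), ?_⟩
  rw [critRadius, hsup, coe_nnnorm, lt_sup_iff] at hf
  rw [critRadius, hsup, coe_nnnorm, right_eq_sup]
  exact (hf.resolve_left (lt_irrefl 1)).le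

end CritRadius

/-- The normal form `f_c`: the polynomial with `f(0) = 0` and `f'(z) = ∏ (z - cᵢ)`. The critical
points `cᵢ` are recovered as the roots of the monic polynomial `f'`. -/
structure IsNormalForm (f : ℂ[X]) : Prop where
  monic_derivative : f.derivative.Monic
  eval_zero : f.eval 0 = 0

namespace IsNormalForm

variable {f : ℂ[X]}

theorem natDegree_mul_norm_coeff_le (hf : IsNormalForm f) (i : ℕ) :
    f.natDegree * ‖f.coeff i‖ ≤ f.natDegree.choose i * critRadius f ^ (f.natDegree - i) := by
  have hR := one_le_critRadius f
  rcases i with _ | i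
  · rw [coeff_zero_eq_eval_zero, hf.eval_zero, norm_zero, mul_zero]
    positivity
  have hcoeff := coeff_le_of_roots_le (p := f.derivative) (f := RingHom.id ℂ) i
    hf.monic_derivative (IsAlgClosed.splits _) fun c hc ↦
      norm_le_critRadius (by rwa [Polynomial.map_id] at hc)
  obtain ⟨n, hn⟩ := Nat.exists_eq_succ_of_ne_zero
    (natDegree_ne_zero_of_monic_derivative hf.monic_derivative)
  rw [Polynomial.map_id, coeff_derivative, norm_mul, natDegree_derivative, hn,
    Nat.succ_sub_one, ← Nat.cast_succ, Complex.norm_natCast] at hcoeff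
  have hchoose : ((n.succ : ℕ) : ℝ) * n.choose i = n.succ.choose (i + 1) * (i.succ : ℕ) := by
    exact_mod_cast Nat.add_one_mul_choose_eq n i
  rw [hn, Nat.succ_sub_succ]
  refine le_of_mul_le_mul_right ?_ (Nat.cast_pos.mpr i.succ_pos : (0 : ℝ) < (i.succ : ℕ))
  calc (n.succ : ℕ) * ‖f.coeff (i + 1)‖ * (i.succ : ℕ)
      ≤ (n.succ : ℕ) * (critRadius f ^ (n - i) * n.choose i) := by
        rw [mul_assoc]; gcongr
    _ = n.succ.choose (i + 1) * critRadius f ^ (n - i) * (i.succ : ℕ) := by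
      linear_combination critRadius f ^ (n - i) * hchoose

theorem escBound_le (hf : IsNormalForm f) (hd : 2 ≤ f.natDegree) :
    escBound f f.natDegree ≤ 2 * f.natDegree * (f.natDegree * critRadius f) := by
  have hR := one_le_critRadius f
  have hlead := norm_leadingCoeff_of_monic_derivative hf.monic_derivative
  have hle := hf.natDegree_mul_norm_coeff_le
  rw [leadingCoeff] at hlead
  generalize f.natDegree = d at *
  have hdR : (d : ℝ) ≤ d * critRadius f := le_mul_of_one_le_right (by positivity) hR
  have hd1 : (1 : ℝ) ≤ d := by exact_mod_cast one_le_two.trans hd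
  refine (escBound_le_iff hd (by positivity)).mpr ⟨hd1.trans hdR, fun i hi ↦ ?_, ?_⟩
  · have hchoose : (d.choose i : ℝ) ≤ d ^ (d - i) := by
      rw [← Nat.choose_symm hi.le]
      exact_mod_cast Nat.choose_le_pow d (d - i)
    rw [norm_div, hlead, div_inv_eq_mul, mul_comm, mul_pow]
    exact (hle i).trans (by gcongr)
  · rw [hlead, inv_inv]
    exact hdR.trans (le_self_pow₀ (hd1.trans hdR) (by omega))

theorem norm_eval_le (hf : IsNormalForm f) {A : ℝ} (hA : critRadius f ≤ A) {z : ℂ}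
    (hz : ‖z‖ ≤ A) : ‖f.eval z‖ ≤ (2 * A) ^ f.natDegree := by
  have hA0 : 0 ≤ A := (norm_nonneg z).trans hz
  have hderiv : ∀ x ∈ Metric.closedBall (0 : ℂ) A, ‖deriv f.eval x‖ ≤ (2 * A) ^ (f.natDegree - 1) :=
    fun x hx ↦ by
      rw [mem_closedBall_zero_iff] at hx
      have hle := norm_eval_le_of_roots_norm_le (IsAlgClosed.splits f.derivative)
        (fun c hc ↦ norm_le_critRadius hc) x
      rw [hf.monic_derivative.leadingCoeff, norm_one, one_mul, natDegree_derivative] at hle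
      rw [Polynomial.deriv]
      refine hle.trans ?_
      gcongr
      · linarith [norm_nonneg x, one_le_critRadius f]
      · linarith
  have hmean := (convex_closedBall (0 : ℂ) A).norm_image_sub_le_of_norm_deriv_le
    (fun x _ ↦ f.differentiableAt) hderiv (Metric.mem_closedBall_self hA0)
    (mem_closedBall_zero_iff.mpr hz)
  rw [hf.eval_zero, sub_zero, sub_zero] at hmean
  calc ‖f.eval z‖ ≤ (2 * A) ^ (f.natDegree - 1) * ‖z‖ := hmean
    _ ≤ (2 * A) ^ (f.natDegree - 1) * (2 * A) := by gcongr; linarith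
    _ = (2 * A) ^ f.natDegree :=
      pow_sub_one_mul (natDegree_ne_zero_of_monic_derivative hf.monic_derivative) _

theorem norm_iterate_eval_le (hf : IsNormalForm f) (hd : 2 ≤ f.natDegree) {z : ℂ}
    (hz : ‖z‖ ≤ critRadius f) (n : ℕ) :
    ‖(fun x ↦ f.eval x)^[n] z‖ ≤ (4 * critRadius f) ^ f.natDegree ^ n / 4 := by
  have hR := one_le_critRadius f
  induction n with
  | zero => simpa using hz
  | succ n ih =>
    rw [Function.iterate_succ_apply']
    have hA : critRadius f ≤ (4 * critRadius f) ^ f.natDegree ^ n / 4 := by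
      have := le_self_pow₀ (by linarith : 1 ≤ 4 * critRadius f)
        (pow_ne_zero n (natDegree_ne_zero_of_monic_derivative hf.monic_derivative))
      linarith
    have h4 : (4 : ℝ) ≤ 2 ^ f.natDegree := by
      calc (4 : ℝ) = 2 ^ 2 := by norm_num
        _ ≤ 2 ^ f.natDegree := pow_le_pow_right₀ one_le_two hd
    calc ‖f.eval ((fun x ↦ f.eval x)^[n] z)‖
        ≤ (2 * ((4 * critRadius f) ^ f.natDegree ^ n / 4)) ^ f.natDegree :=
          hf.norm_eval_le hA ih
      _ = (4 * critRadius f) ^ f.natDegree ^ (n + 1) / 2 ^ f.natDegree := by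
        rw [pow_succ, pow_mul, ← div_pow]; ring
      _ ≤ (4 * critRadius f) ^ f.natDegree ^ (n + 1) / 4 := by gcongr

theorem escapeRate_le (hf : IsNormalForm f) (hd : 2 ≤ f.natDegree) {z : ℂ}
    (hz : ‖z‖ ≤ critRadius f) {g : ℝ}
    (hg : Tendsto
      (fun n : ℕ ↦ ((f.natDegree : ℝ) ^ n)⁻¹ * Real.log (max 1 ‖(fun x ↦ f.eval x)^[n] z‖))
      atTop (𝓝 g)) :
    g ≤ Real.log (4 * critRadius f) := by
  have hR := one_le_critRadius f
  refine le_of_tendsto' hg fun n ↦ ?_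
  rw [inv_mul_le_iff₀ (by positivity)]
  calc Real.log (max 1 ‖(fun x ↦ f.eval x)^[n] z‖)
      ≤ Real.log ((4 * critRadius f) ^ f.natDegree ^ n) := by
        gcongr
        refine max_le (one_le_pow₀ (by linarith)) ((hf.norm_iterate_eval_le hd hz n).trans ?_)
        exact div_le_self (by positivity) (by norm_num)
    _ = f.natDegree ^ n * Real.log (4 * critRadius f) := by rw [Real.log_pow, Nat.cast_pow]

theorem exists_eval_eq_le_norm_sub (hf : IsNormalForm f) {c : ℂ} (hc : f.derivative.IsRoot c)
    {w : ℂ} (hw : f.natDegree * ‖w‖ < (‖c‖ / 2) ^ f.natDegree) (z : ℂ) :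
    ∃ s, f.eval s = w ∧ ‖c‖ / 4 ≤ ‖z - s‖ := by
  have hmonic : (f - C w).derivative.Monic := by simpa using hf.monic_derivative
  have hdeg := natDegree_ne_zero_of_monic_derivative hmonic
  have isRoot_iff {s : ℂ} : (f - C w).IsRoot s ↔ f.eval s = w := by simp [sub_eq_zero]
  by_cases hzc : ‖c‖ / 4 ≤ ‖z - c‖
  · obtain ⟨s, hs, hle⟩ := exists_isRoot_norm_sub_le_of_derivative_isRoot
      hmonic.ne_zero (by simpa using hc) z
    exact ⟨s, isRoot_iff.mp hs, hzc.trans hle⟩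
  · obtain ⟨s, hs, hle⟩ := exists_isRoot_norm_sub_pow_le (IsAlgClosed.splits (f - C w)) hdeg 0
    have hsmall : ‖s‖ < ‖c‖ / 2 := by
      rw [norm_leadingCoeff_of_monic_derivative hmonic, inv_mul_le_iff₀ (by positivity),
        natDegree_sub_C] at hle
      simp only [eval_sub, eval_C, hf.eval_zero, zero_sub, norm_neg] at hle
      exact lt_of_pow_lt_pow_left₀ _ (by positivity) (hle.trans_lt hw)
    have htri : ‖c‖ ≤ ‖z - s‖ + ‖s‖ + ‖z - c‖ := by
      simpa [norm_sub_rev c z] using norm_add₃_le (a := z - s) (b := s) (c := c - z)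
    exact ⟨s, isRoot_iff.mp hs, by linarith⟩

theorem exists_eval_eq_mul_norm_sub_pow_le (hf : IsNormalForm f) (hd : 2 ≤ f.natDegree) {c : ℂ}
    (hc : f.derivative.IsRoot c) {w : ℂ}
    (hw : f.natDegree * ‖w‖ < (‖c‖ / 2) ^ f.natDegree) (z : ℂ) :
    ∃ s, f.eval s = w ∧
      ‖c‖ * ‖z - s‖ ^ (f.natDegree - 1) ≤ 4 * f.natDegree * ‖f.eval z - w‖ := by
  have hmonic : (f - C w).derivative.Monic := by simpa using hf.monic_derivative
  have isRoot_iff {s : ℂ} : (f - C w).IsRoot s ↔ f.eval s = w := by simp [sub_eq_zero]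
  obtain ⟨r, hr, hfar⟩ := hf.exists_eval_eq_le_norm_sub hc hw z
  obtain ⟨s, hs, hle⟩ := exists_isRoot_norm_sub_mul_norm_sub_pow_le
    (IsAlgClosed.splits (f - C w)) (by rwa [natDegree_sub_C]) (isRoot_iff.mpr hr) z
  refine ⟨s, isRoot_iff.mp hs, ?_⟩
  rw [norm_leadingCoeff_of_monic_derivative hmonic, natDegree_sub_C,
    inv_mul_le_iff₀ (by positivity), eval_sub, eval_C] at hle
  have hmul : ‖c‖ / 4 * ‖z - s‖ ^ (f.natDegree - 1) ≤ ‖z - r‖ * ‖z - s‖ ^ (f.natDegree - 1) := by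
    gcongr
  linarith

theorem natDegree_mul_norm_lt_of_norm_le_escBound (hf : IsNormalForm f) (hd : 2 ≤ f.natDegree)
    (hR : 8 * (f.natDegree : ℝ) ^ 3 < critRadius f) {w : ℂ}
    (hw : ‖w‖ ≤ escBound f f.natDegree) :
    f.natDegree * ‖w‖ < (critRadius f / 2) ^ f.natDegree := by
  have hd3 : (1 : ℝ) ≤ (f.natDegree : ℝ) ^ 3 :=
    one_le_pow₀ (by exact_mod_cast one_le_two.trans hd)
  calc f.natDegree * ‖w‖
      ≤ f.natDegree * (2 * f.natDegree * (f.natDegree * critRadius f)) := by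
        gcongr
        exact hw.trans (hf.escBound_le hd)
    _ = 8 * (f.natDegree : ℝ) ^ 3 * critRadius f / 4 := by ring
    _ < critRadius f * critRadius f / 4 := by gcongr; linarith
    _ = (critRadius f / 2) ^ 2 := by ring
    _ ≤ (critRadius f / 2) ^ f.natDegree := pow_le_pow_right₀ (by linarith) hd

theorem exists_eval_eq_norm_sub_le (hf : IsNormalForm f) (hd : 2 ≤ f.natDegree)
    (hR : 8 * (f.natDegree : ℝ) ^ 3 < critRadius f) {c : ℂ} (hc : f.derivative.IsRoot c)
    (hcR : ‖c‖ = critRadius f) {w z : ℂ} (hw : ‖w‖ ≤ escBound f f.natDegree)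
    (hz : ‖f.eval z‖ ≤ escBound f f.natDegree) :
    ∃ s, f.eval s = w ∧ ‖z - s‖ ≤ 16 * (f.natDegree : ℝ) ^ 3 := by
  have hd3 : (1 : ℝ) ≤ (f.natDegree : ℝ) ^ 3 :=
    one_le_pow₀ (by exact_mod_cast one_le_two.trans hd)
  obtain ⟨s, hs, hle⟩ := hf.exists_eval_eq_mul_norm_sub_pow_le hd hc
    (hcR ▸ hf.natDegree_mul_norm_lt_of_norm_le_escBound hd hR hw) z
  have hdist : ‖f.eval z - w‖ ≤ 2 * (2 * f.natDegree * (f.natDegree * critRadius f)) := by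
    linarith [norm_sub_le (f.eval z) w, hf.escBound_le hd]
  have hpow : ‖z - s‖ ^ (f.natDegree - 1) ≤ 16 * (f.natDegree : ℝ) ^ 3 := by
    refine le_of_mul_le_mul_left ?_ (by linarith : 0 < critRadius f)
    calc critRadius f * ‖z - s‖ ^ (f.natDegree - 1)
        ≤ 4 * f.natDegree * ‖f.eval z - w‖ := hcR ▸ hle
      _ ≤ 4 * f.natDegree * (2 * (2 * f.natDegree * (f.natDegree * critRadius f))) := by gcongr
      _ = critRadius f * (16 * (f.natDegree : ℝ) ^ 3) := by ring
  have hd0 : f.natDegree - 1 ≠ 0 := by omega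
  exact ⟨s, hs, le_of_pow_le_pow_left₀ hd0 (by positivity)
    (hpow.trans (le_self_pow₀ (by linarith) hd0))⟩

theorem exists_iterate_three_eq_zero_mul_norm_sub_pow_le (hf : IsNormalForm f)
    (hd : 2 ≤ f.natDegree) (hR : 8 * (f.natDegree : ℝ) ^ 3 < critRadius f) {y : ℂ}
    (hy : ‖(fun x ↦ f.eval x)^[3] y‖ ≤ escBound f f.natDegree) :
    ∃ β, (fun x ↦ f.eval x)^[3] β = 0 ∧ y ≠ β ∧
      critRadius f * ‖y - β‖ ^ (f.natDegree - 1) ≤ 64 * (f.natDegree : ℝ) ^ 4 := by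
  have hpull {z : ℂ} := norm_le_escBound_of_norm_eval_le hd (z := z)
  have hy₂ : ‖f.eval (f.eval y)‖ ≤ escBound f f.natDegree := hpull hy
  have hR1 : 1 < critRadius f :=
    lt_of_le_of_lt (by exact_mod_cast Nat.one_le_iff_ne_zero.mpr (by positivity)) hR
  obtain ⟨c, hc, hcR⟩ := exists_norm_eq_critRadius hR1
  have hsmall {w : ℂ} (hw : ‖w‖ ≤ escBound f f.natDegree) :=
    hcR ▸ hf.natDegree_mul_norm_lt_of_norm_le_escBound hd hR hw
  have h0 : ‖(0 : ℂ)‖ ≤ escBound f f.natDegree := by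
    rw [norm_zero]; exact (norm_nonneg _).trans hy
  -- Choosing `r` far from `f (f y)` rules out `y = β`, for which `Real.log 0 = 0` would be junk.
  obtain ⟨r, hr, hyr⟩ := hf.exists_eval_eq_le_norm_sub hc (hsmall h0) (f.eval (f.eval y))
  have hr_le : ‖r‖ ≤ escBound f f.natDegree := hpull (by rwa [hr])
  obtain ⟨s, hs, hys⟩ := hf.exists_eval_eq_norm_sub_le hd hR hc hcR hr_le hy₂
  have hs_le : ‖s‖ ≤ escBound f f.natDegree := hpull (by rwa [hs])
  obtain ⟨β, hβ, hyβ⟩ := hf.exists_eval_eq_mul_norm_sub_pow_le hd hc (hsmall hs_le) y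
  rw [hcR] at hyr hyβ
  refine ⟨β, ?_, ?_, ?_⟩
  · change f.eval (f.eval (f.eval β)) = 0
    rw [hβ, hs, hr]
  · rintro rfl
    rw [hβ, hs, sub_self, norm_zero] at hyr
    linarith
  · calc critRadius f * ‖y - β‖ ^ (f.natDegree - 1)
        ≤ 4 * f.natDegree * ‖f.eval y - s‖ := hyβ
      _ ≤ 4 * f.natDegree * (16 * (f.natDegree : ℝ) ^ 3) := by gcongr
      _ = 64 * (f.natDegree : ℝ) ^ 4 := by ring

theorem norm_le_of_norm_iterate_three_le_escBound (hf : IsNormalForm f) (hd : 2 ≤ f.natDegree)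
    (hR : critRadius f ≤ 8 * (f.natDegree : ℝ) ^ 3) {y : ℂ}
    (hy : ‖(fun x ↦ f.eval x)^[3] y‖ ≤ escBound f f.natDegree) :
    ‖y‖ ≤ 16 * (f.natDegree : ℝ) ^ 5 := by
  have hpull {z : ℂ} := norm_le_escBound_of_norm_eval_le hd (z := z)
  calc ‖y‖ ≤ escBound f f.natDegree := hpull (hpull (hpull hy))
    _ ≤ 2 * f.natDegree * (f.natDegree * critRadius f) := hf.escBound_le hd
    _ ≤ 2 * f.natDegree * (f.natDegree * (8 * (f.natDegree : ℝ) ^ 3)) := by gcongr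
    _ = 16 * (f.natDegree : ℝ) ^ 5 := by ring

theorem log_norm_le_of_norm_iterate_three_le_escBound (hf : IsNormalForm f) (hd : 2 ≤ f.natDegree)
    (hR : critRadius f ≤ 8 * (f.natDegree : ℝ) ^ 3) {y : ℂ}
    (hy : ‖(fun x ↦ f.eval x)^[3] y‖ ≤ escBound f f.natDegree) :
    Real.log ‖y‖ ≤ -(1 / ((f.natDegree - 1 : ℕ) : ℝ)) * Real.log (4 * critRadius f) +
      Real.log (512 * (f.natDegree : ℝ) ^ 8) := by
  have hd1 : (1 : ℝ) ≤ f.natDegree := by exact_mod_cast one_le_two.trans hd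
  have hR1 := one_le_critRadius f
  have hy_log : Real.log ‖y‖ ≤ Real.log (16 * (f.natDegree : ℝ) ^ 5) := by
    rcases (norm_nonneg y).eq_or_lt with hy0 | hy0
    · rw [← hy0, Real.log_zero]
      exact Real.log_nonneg (by linarith [one_le_pow₀ hd1 (n := 5)])
    · exact Real.log_le_log hy0 (hf.norm_le_of_norm_iterate_three_le_escBound hd hR hy)
  have hR_log : 1 / ((f.natDegree - 1 : ℕ) : ℝ) * Real.log (4 * critRadius f) ≤
      Real.log (32 * (f.natDegree : ℝ) ^ 3) :=
    calc 1 / ((f.natDegree - 1 : ℕ) : ℝ) * Real.log (4 * critRadius f)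
        ≤ Real.log (4 * critRadius f) :=
          mul_le_of_le_one_left (Real.log_nonneg (by linarith))
            (by rw [one_div]; exact Nat.cast_inv_le_one _)
      _ ≤ Real.log (32 * (f.natDegree : ℝ) ^ 3) := Real.log_le_log (by linarith) (by linarith)
  have hsplit : Real.log (512 * (f.natDegree : ℝ) ^ 8) =
      Real.log (16 * (f.natDegree : ℝ) ^ 5) + Real.log (32 * (f.natDegree : ℝ) ^ 3) := by
    rw [← Real.log_mul (by positivity) (by positivity)]
    ring_nf
  linarith

theorem exists_iterate_three_eq_zero_log_norm_sub_le (hf : IsNormalForm f)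
    (hd : 2 ≤ f.natDegree) {y : ℂ}
    (hy : ‖(fun x ↦ f.eval x)^[3] y‖ ≤ escBound f f.natDegree) :
    ∃ β, (fun x ↦ f.eval x)^[3] β = 0 ∧
      Real.log ‖y - β‖ ≤ -(1 / ((f.natDegree - 1 : ℕ) : ℝ)) * Real.log (4 * critRadius f) +
        Real.log (512 * (f.natDegree : ℝ) ^ 8) := by
  have hd1 : (1 : ℝ) ≤ f.natDegree := by exact_mod_cast one_le_two.trans hd
  have hR1 := one_le_critRadius f
  rcases lt_or_ge (8 * (f.natDegree : ℝ) ^ 3) (critRadius f) with hR | hR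
  · obtain ⟨β, hβ, hne, hle⟩ := hf.exists_iterate_three_eq_zero_mul_norm_sub_pow_le hd hR hy
    refine ⟨β, hβ, log_le_of_mul_pow_le (by positivity) (norm_sub_pos_iff.mpr hne) (by omega) ?_ ?_⟩
    · linarith [one_le_pow₀ hd1 (n := 8)]
    · linarith [pow_le_pow_right₀ hd1 (by norm_num : 4 ≤ 8), pow_pos (one_pos.trans_le hd1) 8]
  · have h0 : (fun x ↦ f.eval x)^[3] 0 = 0 := Function.iterate_fixed hf.eval_zero 3
    refine ⟨0, h0, ?_⟩
    rw [sub_zero]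
    exact hf.log_norm_le_of_norm_iterate_three_le_escBound hd hR hy

end IsNormalForm

theorem stmt16_general {f : ℂ[X]} {G : ℂ → ℝ} {M : ℝ} (hd : 2 ≤ f.natDegree) (h0 : f.eval 0 = 0)
    (hmonic : f.derivative.Monic)
    (hG : ∀ z : ℂ, Tendsto
      (fun n : ℕ ↦ ((f.natDegree : ℝ) ^ n)⁻¹ * Real.log (max 1 ‖(fun x ↦ f.eval x)^[n] z‖))
      atTop (𝓝 (G z)))
    (hM : IsGreatest (G '' {c : ℂ | f.derivative.eval c = 0}) M) {y : ℂ}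
    (hy : ‖(fun x ↦ f.eval x)^[3] y‖ ≤ escBound f f.natDegree) :
    ∃ β : ℂ, (fun x ↦ f.eval x)^[3] β = 0 ∧
      Real.log ‖y - β‖ ≤
        -(1 / ((f.natDegree : ℝ) - 1)) * M + Real.log (512 * (f.natDegree : ℝ) ^ 8) := by
  have hf : IsNormalForm f := ⟨hmonic, h0⟩
  obtain ⟨⟨c, hc, rfl⟩, -⟩ := hM
  obtain ⟨β, hβ, hle⟩ := hf.exists_iterate_three_eq_zero_log_norm_sub_le hd hy
  have hc_le : ‖c‖ ≤ critRadius f := norm_le_critRadius ((mem_roots hmonic.ne_zero).mpr hc)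
  have hrate : G c ≤ Real.log (4 * critRadius f) := hf.escapeRate_le hd hc_le (hG c)
  refine ⟨β, hβ, hle.trans ?_⟩
  rw [← Nat.cast_pred (one_pos.trans_le (one_le_two.trans hd))]
  gcongr ?_ + _
  exact mul_le_mul_of_nonpos_left hrate (neg_nonpos.mpr (by positivity))

/-- for d ≥ 2 there is a constant δ depending only on d such that for
every degree d normal-form polynomial f = f_c over ℚ̄ viewed in ℂ (algebraic
coefficients, f(0) = 0, f' monic) with maximal critical escape rate M(f), and every
α ∈ ℂ with |α| ≤ C_f (i.e. α ∉ B_f(∞)), every y with f³(y) = α satisfies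
min_{β : f³(β)=0} log|y - β| ≤ -(1/(d-1)) M(f) + δ. -/
theorem stmt16 (d : ℕ) (hd : 2 ≤ d) :
    ∃ δ : ℝ, ∀ (f : Polynomial ℂ) (G : ℂ → ℝ) (M : ℝ),
      f.natDegree = d → (∀ n : ℕ, IsAlgebraic ℚ (f.coeff n)) →
      f.eval 0 = 0 → (Polynomial.derivative f).Monic →
      (∀ z : ℂ, Tendsto
        (fun n : ℕ => ((d : ℝ) ^ n)⁻¹ * Real.log (max 1 ‖(fun x => f.eval x)^[n] z‖))
        atTop (nhds (G z))) →
      IsGreatest (G '' {c : ℂ | (Polynomial.derivative f).eval c = 0}) M →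
      ∀ α y : ℂ, ‖α‖ ≤ escBound f d → (fun x => f.eval x)^[3] y = α →
        ∃ β : ℂ, (fun x => f.eval x)^[3] β = 0 ∧
          Real.log ‖y - β‖ ≤ -(1 / ((d : ℝ) - 1)) * M + δ := by
  refine ⟨Real.log (512 * (d : ℝ) ^ 8), ?_⟩
  rintro f G M rfl _ h0 hmonic hG hM α y hα rfl
  exact stmt16_general hd h0 hmonic hG hM hα
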